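/- There is an absolute constant c > 0 such that for all positive integers n, m, k with 2m ≤ k·n and k ≤ m, the number g(n,m,k) of k-queues on the vertex set {1,…,n} having exactly m edges is at most (c·k·n/m)^(2m). -/

import Mathlib

/-!
Two edges are non-nested exactly when they are comparable in the product order, so a queue is a
finite chain. A finite chain in a product is recovered from the multisets of its first and of its
second coordinates by sorting both and zipping, and a queue on `n` vertices with `m` edges is
therefore one of at most `multichoose n m ^ 2` sets.

Laying the `k` parts of a `k`-queue side by side, each on its own block of `n` vertices, produces a
single queue on `k * n` vertices, from which the `k`-queue is recovered by reducing vertices modulo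
`n`. Hence `g(n,m,k) ≤ g(kn,m,1)`. Finally, distinct edges of a queue have distinct endpoint sums,
so a queue on `N` vertices has at most `2N` edges; thus either `g(N,m,1) = 0` or `N + m ≤ 3N`, and
the estimate `choose r m ≤ (e r / m) ^ m` yields the constant `3e`.
-/

/-- Two edges `(v,w)` and `(x,y)` (each with first coordinate ≤ second) of an
ordered graph are nested (one is nested inside the other). -/
def Nested (e f : ℕ × ℕ) : Prop :=
  (e.1 < f.1 ∧ f.2 < e.2) ∨ (f.1 < e.1 ∧ e.2 < f.2)

/-- `E` is the edge set of an ordered graph on the vertex set `{1, …, n}`: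
each edge is a pair `(v,w)` with `1 ≤ v ≤ w ≤ n` (loops allowed, no parallel edges). -/
def IsOrderedGraph (n : ℕ) (E : Finset (ℕ × ℕ)) : Prop :=
  ∀ e ∈ E, 1 ≤ e.1 ∧ e.1 ≤ e.2 ∧ e.2 ≤ n

/-- An edge set is a queue if no two of its edges are nested. -/
def IsQueue (E : Finset (ℕ × ℕ)) : Prop :=
  ∀ e ∈ E, ∀ f ∈ E, ¬ Nested e f

/-- An edge set is a `k`-queue if it can be partitioned into at most `k` parts,
each of which is a queue. -/
def IsKQueue (k : ℕ) (E : Finset (ℕ × ℕ)) : Prop :=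
  ∃ parts : Fin k → Finset (ℕ × ℕ),
    (∀ e ∈ E, ∃ i, e ∈ parts i) ∧
    (∀ i, parts i ⊆ E) ∧
    (∀ i j, i ≠ j → Disjoint (parts i) (parts j)) ∧
    (∀ i, IsQueue (parts i))


/-- `kQueueCountE n m k` is the number `g(n,m,k)` of `k`-queues on the vertex
set `{1, …, n}` having exactly `m` edges. -/
noncomputable def kQueueCountE (n m k : ℕ) : ℕ :=
  {E : Finset (ℕ × ℕ) | IsOrderedGraph n E ∧ E.card = m ∧ IsKQueue k E}.ncard

open Finset

section Multisets

/-- The multisets of cardinality `m` with all elements in `s`, as a set of bare multisets so that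
the coordinate multisets of a finite set can be shown to lie in it without a subtype. -/
def multisetsOfCard {α : Type*} (s : Finset α) (m : ℕ) : Set (Multiset α) :=
  {M | (∀ a ∈ M, a ∈ s) ∧ M.card = m}

variable {α : Type*} (s : Finset α) (m : ℕ)

lemma multisetsOfCard_eq_range :
    multisetsOfCard s m = Set.range fun x : Sym s m ↦ (x : Multiset s).map Subtype.val := by
  ext M
  constructor
  · rintro ⟨hs, hm⟩
    lift M to Multiset s using hs
    exact ⟨⟨M, by simpa using hm⟩, rfl⟩
  · rintro ⟨x, rfl⟩
    exact ⟨by simp +contextual, by simp⟩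

lemma finite_multisetsOfCard : (multisetsOfCard s m).Finite := by
  classical
  rw [multisetsOfCard_eq_range]
  exact Set.finite_range _

lemma ncard_multisetsOfCard : (multisetsOfCard s m).ncard = (#s).multichoose m := by
  classical
  have hinj : Function.Injective fun x : Sym s m ↦ (x : Multiset s).map Subtype.val :=
    (Multiset.map_injective Subtype.val_injective).comp Sym.coe_injective
  rw [multisetsOfCard_eq_range, ← Set.image_univ, Set.ncard_image_of_injective _ hinj,
    Set.ncard_univ, Nat.card_eq_fintype_card, Sym.card_sym_eq_multichoose, Fintype.card_coe]

end Multisets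

section Chains

variable {α β : Type*} [PartialOrder α] [PartialOrder β]

lemma exists_pairwise_le_of_isChain {s : Multiset α} (hs : IsChain (· ≤ ·) {a | a ∈ s}) :
    ∃ l : List α, (l : Multiset α) = s ∧ l.Pairwise (· ≤ ·) := by
  classical
  obtain ⟨r, hr, hle⟩ := extend_partialOrder ((· ≤ ·) : α → α → Prop)
  refine ⟨s.sort r, s.sort_eq r, (s.pairwise_sort r).imp_of_mem fun {a b} ha hb hab ↦ ?_⟩
  rw [Multiset.mem_sort] at ha hb
  refine (hs.total ha hb).elim id fun hba ↦ ?_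
  exact (antisymm_of r hab (hle _ _ hba)).le

lemma eq_of_isChain_of_map_fst_eq_of_map_snd_eq {s t : Multiset (α × β)}
    (hs : IsChain (· ≤ ·) {a | a ∈ s}) (ht : IsChain (· ≤ ·) {a | a ∈ t})
    (hfst : s.map Prod.fst = t.map Prod.fst) (hsnd : s.map Prod.snd = t.map Prod.snd) :
    s = t := by
  obtain ⟨l, rfl, hl⟩ := exists_pairwise_le_of_isChain hs
  obtain ⟨r, rfl, hr⟩ := exists_pairwise_le_of_isChain ht
  simp only [Multiset.map_coe, Multiset.coe_eq_coe] at hfst hsnd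
  have hfst' : l.map Prod.fst = r.map Prod.fst :=
    hfst.eq_of_pairwise' (hl.map _ fun _ _ h ↦ h.1) (hr.map _ fun _ _ h ↦ h.1)
  have hsnd' : l.map Prod.snd = r.map Prod.snd :=
    hsnd.eq_of_pairwise' (hl.map _ fun _ _ h ↦ h.2) (hr.map _ fun _ _ h ↦ h.2)
  rw [← List.zip_unzip l, ← List.zip_unzip r, List.unzip_eq_map, List.unzip_eq_map, hfst', hsnd']

lemma ncard_le_multichoose_mul_of_isChain {s : Finset α} {t : Finset β} {m : ℕ}
    {𝒬 : Set (Finset (α × β))} (hsub : ∀ Q ∈ 𝒬, Q ⊆ s ×ˢ t) (hcard : ∀ Q ∈ 𝒬, #Q = m)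
    (hchain : ∀ Q ∈ 𝒬, IsChain (· ≤ ·) (Q : Set (α × β))) :
    𝒬.ncard ≤ (#s).multichoose m * (#t).multichoose m := by
  have hfst : ∀ Q ∈ 𝒬, Q.val.map Prod.fst ∈ multisetsOfCard s m := fun Q hQ ↦
    ⟨Multiset.forall_mem_map_iff.2 fun _ he ↦ (mem_product.1 (hsub Q hQ he)).1,
      (Multiset.card_map _ _).trans (hcard Q hQ)⟩
  have hsnd : ∀ Q ∈ 𝒬, Q.val.map Prod.snd ∈ multisetsOfCard t m := fun Q hQ ↦
    ⟨Multiset.forall_mem_map_iff.2 fun _ he ↦ (mem_product.1 (hsub Q hQ he)).2,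
      (Multiset.card_map _ _).trans (hcard Q hQ)⟩
  have hinj : 𝒬.InjOn fun Q ↦ (Q.val.map Prod.fst, Q.val.map Prod.snd) := fun Q hQ R hR h ↦
    val_injective (eq_of_isChain_of_map_fst_eq_of_map_snd_eq (hchain Q hQ) (hchain R hR)
      (congrArg Prod.fst h) (congrArg Prod.snd h))
  rw [← ncard_multisetsOfCard, ← ncard_multisetsOfCard, ← Set.ncard_prod]
  exact Set.ncard_le_ncard_of_injOn _ (fun Q hQ ↦ ⟨hfst Q hQ, hsnd Q hQ⟩) hinj
    ((finite_multisetsOfCard s m).prod (finite_multisetsOfCard t m))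

end Chains

lemma not_nested_iff_le_or_le {e f : ℕ × ℕ} : ¬ Nested e f ↔ e ≤ f ∨ f ≤ e := by
  simp only [Nested, Prod.le_def]
  omega

lemma isQueue_iff_isChain {Q : Finset (ℕ × ℕ)} :
    IsQueue Q ↔ IsChain (· ≤ ·) (Q : Set (ℕ × ℕ)) := by
  simp only [IsQueue, not_nested_iff_le_or_le]
  exact ⟨fun h e he f hf _ ↦ h e he f hf, fun h e he f hf ↦ h.total he hf⟩

lemma IsOrderedGraph.subset_product {n : ℕ} {E : Finset (ℕ × ℕ)} (hE : IsOrderedGraph n E) :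
    E ⊆ Icc 1 n ×ˢ Icc 1 n := by
  intro e he
  have := hE e he
  simp only [mem_product, mem_Icc]
  omega

lemma finite_setOf_isOrderedGraph (n : ℕ) : {E | IsOrderedGraph n E}.Finite :=
  (Icc 1 n ×ˢ Icc 1 n).powerset.finite_toSet.subset fun _ hE ↦
    mem_coe.2 (mem_powerset.2 hE.subset_product)

lemma isKQueue_one {E : Finset (ℕ × ℕ)} : IsKQueue 1 E ↔ IsQueue E := by
  constructor
  · rintro ⟨parts, hcover, -, -, hqueue⟩ e he f hf
    obtain ⟨i, hei⟩ := hcover e he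
    obtain ⟨j, hfj⟩ := hcover f hf
    exact hqueue i e hei f (Subsingleton.elim j i ▸ hfj)
  · intro hE
    exact ⟨fun _ ↦ E, fun _ he ↦ ⟨0, he⟩, fun _ ↦ Subset.rfl,
      fun i j hij ↦ absurd (Subsingleton.elim i j) hij, fun _ ↦ hE⟩

lemma IsKQueue.exists_coloring {k : ℕ} {E : Finset (ℕ × ℕ)} (hE : IsKQueue k E) :
    ∃ col : ℕ × ℕ → ℕ, (∀ e ∈ E, col e < k) ∧
      ∀ e ∈ E, ∀ f ∈ E, col e = col f → ¬ Nested e f := by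
  obtain ⟨parts, hcover, -, -, hqueue⟩ := hE
  have hcolor : ∀ e ∈ E, ∃ c : ℕ, ∃ hc : c < k, e ∈ parts ⟨c, hc⟩ := fun e he ↦ by
    obtain ⟨i, hi⟩ := hcover e he
    exact ⟨i, i.isLt, hi⟩
  choose! col hlt hmem using hcolor
  refine ⟨col, hlt, fun e he f hf hef ↦ hqueue ⟨col e, hlt e he⟩ e (hmem e he) f ?_⟩
  simpa only [hef] using hmem f hf

lemma IsQueue.card_le {n : ℕ} {Q : Finset (ℕ × ℕ)} (hQ : IsQueue Q) (hn : IsOrderedGraph n Q) :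
    #Q ≤ 2 * n := by
  have hmaps : Set.MapsTo (fun e : ℕ × ℕ ↦ e.1 + e.2) Q (Icc 1 (2 * n)) := by
    intro e he
    have := hn e he
    simp only [coe_Icc, Set.mem_Icc]
    omega
  have hinj : Set.InjOn (fun e : ℕ × ℕ ↦ e.1 + e.2) Q := by
    intro e he f hf hsum
    have hnested := hQ e he f hf
    simp only [Nested] at hnested hsum
    ext <;> omega
  simpa using card_le_card_of_injOn _ hmaps hinj

lemma kQueueCountE_one_eq_zero {n m : ℕ} (h : 2 * n < m) : kQueueCountE n m 1 = 0 := by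
  have hempty : {E | IsOrderedGraph n E ∧ #E = m ∧ IsKQueue 1 E} = ∅ :=
    Set.eq_empty_of_forall_notMem fun E ⟨hn, hcard, hE⟩ ↦
      (hcard ▸ h).not_ge ((isKQueue_one.1 hE).card_le hn)
  rw [kQueueCountE, hempty, Set.ncard_empty]

lemma kQueueCountE_one_le_multichoose_sq (n m : ℕ) :
    kQueueCountE n m 1 ≤ n.multichoose m ^ 2 := by
  have hcount := ncard_le_multichoose_mul_of_isChain (s := Icc 1 n) (t := Icc 1 n) (m := m)
    (𝒬 := {E | IsOrderedGraph n E ∧ #E = m ∧ IsKQueue 1 E}) (fun _ hE ↦ hE.1.subset_product)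
    (fun _ hE ↦ hE.2.1) fun _ hE ↦ isQueue_iff_isChain.1 (isKQueue_one.1 hE.2.2)
  rwa [Nat.card_Icc, Nat.add_sub_cancel, ← sq] at hcount

section Juxtaposition

/-- The ordered graph obtained from `E`, on the vertices `1, …, n`, by moving every edge `e` to the
block of vertices `col e * n + 1, …, col e * n + n`. It turns the colour classes of a `k`-queue into
consecutive parts of one queue on `k * n` vertices. Colours start from `0`. -/
def juxtapose (n : ℕ) (col : ℕ × ℕ → ℕ) (E : Finset (ℕ × ℕ)) : Finset (ℕ × ℕ) :=
  E.image fun e ↦ (col e * n + e.1, col e * n + e.2)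

/-- The vertex of the block `1, …, n` in the same position as `v` in its own block, for undoing
`juxtapose`. Blocks end at the multiples of `n`, whence the shift by `1` around the remainder. -/
def toFirstBlock (n v : ℕ) : ℕ :=
  (v - 1) % n + 1

variable {n k : ℕ} {col : ℕ × ℕ → ℕ} {E : Finset (ℕ × ℕ)}

lemma isOrderedGraph_juxtapose (hE : IsOrderedGraph n E) (hcol : ∀ e ∈ E, col e < k) :
    IsOrderedGraph (k * n) (juxtapose n col E) := by
  simp only [IsOrderedGraph, juxtapose, forall_mem_image]
  intro e he
  have hblock : (col e + 1) * n ≤ k * n := Nat.mul_le_mul_right n (hcol e he)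
  have := hE e he
  rw [add_one_mul] at hblock
  omega

lemma isQueue_juxtapose (hE : IsOrderedGraph n E)
    (hcol : ∀ e ∈ E, ∀ f ∈ E, col e = col f → ¬ Nested e f) : IsQueue (juxtapose n col E) := by
  have hseparated : ∀ e ∈ E, ∀ f ∈ E, col e < col f → col e * n + e.2 < col f * n + f.1 := by
    intro e he f hf hlt
    have hblock : (col e + 1) * n ≤ col f * n := Nat.mul_le_mul_right n hlt
    have hen := hE e he
    have hfn := hE f hf
    rw [add_one_mul] at hblock
    omega
  simp only [IsQueue, juxtapose, forall_mem_image]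
  intro e he f hf
  have hen := hE e he
  have hfn := hE f hf
  rcases lt_trichotomy (col e) (col f) with hlt | heq | hlt
  · have := hseparated e he f hf hlt
    simp only [Nested]
    omega
  · simpa [Nested, heq] using hcol e he f hf heq
  · have := hseparated f hf e he hlt
    simp only [Nested]
    omega

lemma leftInvOn_toFirstBlock (hE : IsOrderedGraph n E) (col : ℕ × ℕ → ℕ) :
    Set.LeftInvOn (Prod.map (toFirstBlock n) (toFirstBlock n))
      (fun e ↦ (col e * n + e.1, col e * n + e.2)) E := by
  intro e he
  have hen := hE e he
  have hblock : ∀ v, 1 ≤ v → v ≤ n → toFirstBlock n (col e * n + v) = v := by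
    intro v hv hvn
    rw [toFirstBlock, Nat.add_sub_assoc hv, Nat.mul_add_mod_self_right,
      Nat.mod_eq_of_lt (by omega), Nat.sub_add_cancel hv]
  exact Prod.ext (hblock e.1 (by omega) (by omega)) (hblock e.2 (by omega) (by omega))

lemma card_juxtapose (hE : IsOrderedGraph n E) (col : ℕ × ℕ → ℕ) : #(juxtapose n col E) = #E :=
  card_image_of_injOn (leftInvOn_toFirstBlock hE col).injOn

lemma image_toFirstBlock_juxtapose (hE : IsOrderedGraph n E) (col : ℕ × ℕ → ℕ) :
    (juxtapose n col E).image (Prod.map (toFirstBlock n) (toFirstBlock n)) = E := by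
  rw [← coe_inj, juxtapose, coe_image, coe_image]
  exact (leftInvOn_toFirstBlock hE col).image_image

lemma kQueueCountE_le_kQueueCountE_mul_one (n m k : ℕ) :
    kQueueCountE n m k ≤ kQueueCountE (k * n) m 1 := by
  have hcolor : ∀ E, IsKQueue k E → ∃ col : ℕ × ℕ → ℕ, (∀ e ∈ E, col e < k) ∧
      ∀ e ∈ E, ∀ f ∈ E, col e = col f → ¬ Nested e f := fun _ hE ↦ hE.exists_coloring
  choose! col hlt hcol using hcolor
  refine Set.ncard_le_ncard_of_injOn (fun E ↦ juxtapose n (col E) E) ?_ ?_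
    ((finite_setOf_isOrderedGraph (k * n)).subset fun _ hE ↦ hE.1)
  · rintro E ⟨hn, hcard, hE⟩
    exact ⟨isOrderedGraph_juxtapose hn (hlt E hE), (card_juxtapose hn _).trans hcard,
      isKQueue_one.2 (isQueue_juxtapose hn (hcol E hE))⟩
  · rintro E ⟨hnE, -, -⟩ F ⟨hnF, -, -⟩ (hEF : juxtapose n (col E) E = juxtapose n (col F) F)
    rw [← image_toFirstBlock_juxtapose hnE (col E), hEF, image_toFirstBlock_juxtapose hnF]

end Juxtaposition

section Estimates

lemma choose_le_exp_one_mul_div_pow (n r : ℕ) :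
    (n.choose r : ℝ) ≤ (Real.exp 1 * n / r) ^ r := by
  have hpos : (0 : ℝ) < (r : ℝ) ^ r := by exact_mod_cast Nat.pow_self_pos
  calc (n.choose r : ℝ) ≤ (n : ℝ) ^ r / r.factorial := Nat.choose_le_pow_div r n
    _ = (n : ℝ) ^ r / (r : ℝ) ^ r * ((r : ℝ) ^ r / r.factorial) :=
        (div_mul_div_cancel₀ hpos.ne').symm
    _ ≤ (n : ℝ) ^ r / (r : ℝ) ^ r * Real.exp r := by
        gcongr
        exact Real.pow_div_factorial_le_exp _ r.cast_nonneg r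
    _ = (Real.exp 1 * n / r) ^ r := by
        rw [← Real.exp_one_pow, div_pow, mul_pow]
        ring

lemma multichoose_le_exp_one_mul_div_pow (n r : ℕ) :
    (n.multichoose r : ℝ) ≤ (Real.exp 1 * (n + r) / r) ^ r := by
  have hle : n.multichoose r ≤ (n + r).choose r := by
    rw [Nat.multichoose_eq]
    exact Nat.choose_le_choose r (Nat.sub_le _ 1)
  calc (n.multichoose r : ℝ) ≤ (n + r).choose r := mod_cast hle
    _ ≤ (Real.exp 1 * (n + r : ℕ) / r) ^ r := choose_le_exp_one_mul_div_pow _ r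
    _ = (Real.exp 1 * (n + r) / r) ^ r := by rw [Nat.cast_add]

end Estimates

lemma kQueueCountE_one_le (n m : ℕ) :
    (kQueueCountE n m 1 : ℝ) ≤ (3 * Real.exp 1 * n / m) ^ (2 * m) := by
  rcases lt_or_ge (2 * n) m with hlt | hle
  · rw [kQueueCountE_one_eq_zero hlt, Nat.cast_zero]
    positivity
  · have hsum : (n + m : ℝ) ≤ 3 * n := by
      exact_mod_cast (by omega : n + m ≤ 3 * n)
    calc (kQueueCountE n m 1 : ℝ) ≤ (n.multichoose m : ℝ) ^ 2 :=
          mod_cast kQueueCountE_one_le_multichoose_sq n m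
      _ ≤ ((Real.exp 1 * (n + m) / m) ^ m) ^ 2 := by
          gcongr
          exact multichoose_le_exp_one_mul_div_pow n m
      _ ≤ ((Real.exp 1 * (3 * n) / m) ^ m) ^ 2 := by gcongr
      _ = (3 * Real.exp 1 * n / m) ^ (2 * m) := by
          rw [← pow_mul, mul_comm m 2, ← mul_assoc, mul_comm (Real.exp 1) 3]

theorem kQueueCountE_le_general (n m k : ℕ) :
    (kQueueCountE n m k : ℝ) ≤ (3 * Real.exp 1 * k * n / m) ^ (2 * m) :=
  calc (kQueueCountE n m k : ℝ) ≤ kQueueCountE (k * n) m 1 :=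
        mod_cast kQueueCountE_le_kQueueCountE_mul_one n m k
    _ ≤ (3 * Real.exp 1 * (k * n : ℕ) / m) ^ (2 * m) := kQueueCountE_one_le _ m
    _ = (3 * Real.exp 1 * k * n / m) ^ (2 * m) := by rw [Nat.cast_mul, mul_assoc _ (k : ℝ)]

/-- There is an absolute constant `c > 0` such that for all positive integers
`n`, `m`, `k` with `2m ≤ k * n` and `k ≤ m`, the number of `k`-queues on
`{1, …, n}` with exactly `m` edges is at most `(c * k * n / m) ^ (2 * m)`. -/
theorem kQueueCountE_le :
    ∃ c : ℝ, 0 < c ∧ ∀ n m k : ℕ, 0 < n → 0 < m → 0 < k →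
      2 * m ≤ k * n → k ≤ m →
      (kQueueCountE n m k : ℝ) ≤ (c * k * n / m) ^ (2 * m) :=
  ⟨3 * Real.exp 1, by positivity, fun n m k _ _ _ _ _ ↦ kQueueCountE_le_general n m k⟩
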